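/- For every A ⊆ ℕ, lim_{n→∞} sup_{k∈ℕ} μ_k(A \ {0,1,…,n}) = limsup_{k→∞} μ_k(A); that is, the exhaustive norm ‖A‖_φ = lim_n φ(A \ [0,n]) associated with φ(A) = sup_k μ_k(A) equals limsup_k μ_k(A). -/

import Mathlib

/-! Removing from `A` a finite set `s` changes `μ_k(A)` by `μ_k(A ∩ s) ≤ |s| / |F_k|`, which tends
to `0` as `k → ∞`; so `limsup_k μ_k(A) = limsup_k μ_k(A \ [0, n]) ≤ sup_k μ_k(A \ [0, n])` for every
`n`. Conversely, if `c > limsup_k μ_k(A)`, then `μ_k(A \ [0, n]) ≤ μ_k(A) < c` for all `n` and all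
but finitely many `k`, and for each of the remaining `k` the interval `[0, n]` eventually swallows
`F_k`, so that `μ_k(A \ [0, n]) = 0`. -/

open Filter

/-- `mu F n A = |A ∩ F n| / |F n|`. -/
noncomputable def mu (F : ℕ → Finset ℕ) (n : ℕ) (A : Set ℕ) : ℝ :=
  (A ∩ (F n : Set ℕ)).ncard / (F n).card

open Set Topology

section SupLimsup

variable {ι κ : Type*}

lemma limsup_le_ciSup_of_tendsto_sub {f : Filter κ} {u v : κ → ℝ}
    (hu : IsCoboundedUnder (· ≤ ·) f u) (hv : BddAbove (range v))
    (huv : Tendsto (fun k => u k - v k) f (𝓝 0)) : limsup u f ≤ ⨆ k, v k := by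
  refine le_of_forall_pos_le_add fun ε hε => limsup_le_of_le hu ?_
  filter_upwards [huv.eventually_lt_const hε] with k hk
  have hvk : v k ≤ ⨆ k, v k := le_ciSup hv k
  linarith

lemma eventually_ciSup_le_of_cofinite {α : Type*} [ConditionallyCompleteLattice α] [Nonempty κ]
    {l : Filter ι} {v : ι → κ → α} {c : α} (hcofinite : ∀ᶠ k in cofinite, ∀ i, v i k ≤ c)
    (hv : ∀ k, ∀ᶠ i in l, v i k ≤ c) : ∀ᶠ i in l, ⨆ k, v i k ≤ c := by
  have hfinite : {k | ¬ ∀ i, v i k ≤ c}.Finite := eventually_cofinite.1 hcofinite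
  filter_upwards [(eventually_all_finite hfinite).2 fun k _ => hv k] with i hi
  refine ciSup_le fun k => ?_
  by_cases hk : ∀ i, v i k ≤ c
  · exact hk i
  · exact hi k hk

theorem tendsto_ciSup_limsup_cofinite [Infinite κ] {l : Filter ι} [NeBot l] {u : κ → ℝ}
    {v : ι → κ → ℝ} (hu : BddAbove (range u)) (hvu : ∀ i k, v i k ≤ u k)
    (hsub : ∀ i, Tendsto (fun k => u k - v i k) cofinite (𝓝 0))
    (hv : ∀ k, Tendsto (fun i => v i k) l (𝓝 0)) :
    Tendsto (fun i => ⨆ k, v i k) l (𝓝 (limsup u cofinite)) := by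
  have hu_nonneg (k : κ) : 0 ≤ u k := le_of_tendsto' (hv k) fun i => hvu i k
  have hu_above : IsBoundedUnder (· ≤ ·) cofinite u := hu.isBoundedUnder_of_range
  have hu_below : IsBoundedUnder (· ≥ ·) cofinite u := isBoundedUnder_of ⟨0, hu_nonneg⟩
  have lower (i : ι) : limsup u cofinite ≤ ⨆ k, v i k :=
    limsup_le_ciSup_of_tendsto_sub hu_below.isCoboundedUnder_le (hu.range_mono _ (hvu i)) (hsub i)
  have limsup_nonneg : 0 ≤ limsup u cofinite :=
    le_limsup_of_frequently_le (Frequently.of_forall hu_nonneg) hu_above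
  refine tendsto_order.2 ⟨fun a ha => .of_forall fun i => ha.trans_le (lower i), fun a ha => ?_⟩
  obtain ⟨c, hc, hca⟩ := exists_between ha
  have upper : ∀ᶠ i in l, ⨆ k, v i k ≤ c :=
    eventually_ciSup_le_of_cofinite
      ((eventually_lt_of_limsup_lt hc hu_above).mono fun k hk i => (hvu i k).trans hk.le)
      fun k => (hv k).eventually_le_const (limsup_nonneg.trans_lt hc)
  exact upper.mono fun i hi => hi.trans_lt hca

end SupLimsup

section Density

variable (F : ℕ → Finset ℕ) (k : ℕ)

lemma mu_nonneg (A : Set ℕ) : 0 ≤ mu F k A :=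
  div_nonneg (Nat.cast_nonneg _) (Nat.cast_nonneg _)

lemma mu_le_one (A : Set ℕ) : mu F k A ≤ 1 := by
  have hcard : (A ∩ (F k : Set ℕ)).ncard ≤ (F k).card :=
    (ncard_le_ncard inter_subset_right).trans_eq (ncard_coe_finset _)
  exact div_le_one_of_le₀ (Nat.cast_le.2 hcard) (Nat.cast_nonneg _)

lemma mu_inter_add_diff (A B : Set ℕ) : mu F k (A ∩ B) + mu F k (A \ B) = mu F k A := by
  have hcard : (A ∩ B ∩ (F k : Set ℕ)).ncard + (A \ B ∩ (F k : Set ℕ)).ncard =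
      (A ∩ (F k : Set ℕ)).ncard := by
    rw [inter_right_comm, sdiff_inter_right_comm]
    exact ncard_inter_add_ncard_sdiff_eq_ncard _ _ ((F k).finite_toSet.inter_of_right A)
  rw [mu, mu, mu, ← add_div, ← hcard, Nat.cast_add]

lemma mu_diff_le (A B : Set ℕ) : mu F k (A \ B) ≤ mu F k A := by
  linarith [mu_inter_add_diff F k A B, mu_nonneg F k (A ∩ B)]

variable {F} in
lemma tendsto_mu_zero_of_finite {l : Filter ℕ} (hcard : Tendsto (fun k => (F k).card) l atTop)
    {s : Set ℕ} (hs : s.Finite) : Tendsto (fun k => mu F k s) l (𝓝 0) := by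
  have hbound (k : ℕ) : mu F k s ≤ s.ncard / (F k).card := by
    have hle : (s ∩ (F k : Set ℕ)).ncard ≤ s.ncard := ncard_le_ncard inter_subset_left hs
    unfold mu
    gcongr
  exact squeeze_zero (fun k => mu_nonneg F k s) hbound
    (tendsto_const_nhds.div_atTop (tendsto_natCast_atTop_atTop.comp hcard))

lemma tendsto_mu_diff_Iic_zero (A : Set ℕ) :
    Tendsto (fun n => mu F k (A \ Iic n)) atTop (𝓝 0) := by
  obtain ⟨N, hN⟩ := (F k).bddAbove
  refine tendsto_const_nhds.congr' ?_
  filter_upwards [eventually_ge_atTop N] with n hn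
  have hempty : A \ Iic n ∩ (F k : Set ℕ) = ∅ :=
    disjoint_iff_inter_eq_empty.1
      (disjoint_sdiff_left.mono_right fun x hx => (hN hx).trans hn)
  rw [mu, hempty, ncard_empty, Nat.cast_zero, zero_div]

end Density

/-- The exhaustive norm `‖A‖_φ = lim_n sup_k μ_k(A \ {0,…,n})` equals
`limsup_k μ_k(A)`. -/
theorem stmt6 (F : ℕ → Finset ℕ) (hne : ∀ n, (F n).Nonempty)
    (hcard : Tendsto (fun n => (F n).card) atTop atTop) (A : Set ℕ) :
    Tendsto (fun n => ⨆ k, mu F k (A \ Set.Iic n)) atTop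
      (nhds (limsup (fun k => mu F k A) atTop)) := by
  have hbdd : BddAbove (range fun k => mu F k A) := ⟨1, forall_mem_range.2 (mu_le_one F · A)⟩
  have hsub (n : ℕ) : Tendsto (fun k => mu F k A - mu F k (A \ Iic n)) atTop (𝓝 0) := by
    simpa only [← mu_inter_add_diff F _ A (Iic n), add_sub_cancel_right] using
      tendsto_mu_zero_of_finite hcard ((finite_Iic n).inter_of_right A)
  rw [← Nat.cofinite_eq_atTop] at hsub
  simpa only [Nat.cofinite_eq_atTop] using
    tendsto_ciSup_limsup_cofinite hbdd (fun n k => mu_diff_le F k A (Iic n)) hsub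
      (fun k => tendsto_mu_diff_Iic_zero F k A)
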